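/- Let T_n be uniformly distributed over the set of plane trees with n edges and let T_∞ be the uniform infinite plane tree. For every k ≥ 0, the truncation [T_n]_k (the plane tree obtained by keeping only the first k generations) converges in distribution, as n → ∞, to [T_∞]_k: for every fixed finite plane tree τ of height at most k, the probability that [T_n]_k = τ converges to the probability that [T_∞]_k = τ. -/

import Mathlib

open MeasureTheory ProbabilityTheory
open scoped ENNReal

/-- An infinite plane tree, encoded by its set of vertices in Ulam–Harris labelling
(a vertex is the list of child-indices on the path from the root `[]` to it):
the root belongs to the tree, the vertex set is closed under taking parents and
left siblings, and every vertex has finitely many children. -/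
def IsTree (t : List ℕ → Bool) : Prop :=
  t [] = true ∧
  (∀ u i, t (u ++ [i]) = true → t u = true) ∧
  (∀ u i j, j ≤ i → t (u ++ [i]) = true → t (u ++ [j]) = true) ∧
  (∀ u, {i : ℕ | t (u ++ [i]) = true}.Finite)

/-- A finite plane tree in Ulam–Harris labelling. -/
def IsFinTree (t : List ℕ → Bool) : Prop :=
  t [] = true ∧
  (∀ u i, t (u ++ [i]) = true → t u = true) ∧
  (∀ u i j, j ≤ i → t (u ++ [i]) = true → t (u ++ [j]) = true) ∧
  {u | t u = true}.Finite

/-- `T` is distributed as the uniform infinite plane tree (the critical geometric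
Galton–Watson tree conditioned to survive): `T` is almost surely a tree and, for every `k`
and every finite plane tree `t₀` of height at most `k`, the probability that the first `k`
generations of `T` coincide with `t₀` equals
`z_k(t₀) · ∏_{|u| < k} 2^{-(c_u(t₀)+1)}
  = z_k(t₀) · (1/2)^{#{u ∈ t₀ : |u| < k} + #t₀ - 1}`,
where `z_k(t₀)` is the number of vertices of `t₀` at generation `k` and `c_u(t₀)` the number
of children of `u` in `t₀` (each vertex of `t₀` other than the root being the child of a
unique vertex at generation `< k`). -/
def HasUIPTLaw {Ω : Type*} [MeasurableSpace Ω] (P : Measure Ω)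
    (T : Ω → List ℕ → Bool) : Prop :=
  (∀ᵐ ω ∂P, IsTree (T ω)) ∧
  ∀ (k : ℕ) (t₀ : List ℕ → Bool), IsFinTree t₀ → (∀ u, t₀ u = true → u.length ≤ k) →
    P {ω | ∀ u : List ℕ, u.length ≤ k → T ω u = t₀ u}
      = (Nat.card {u : List ℕ | t₀ u = true ∧ u.length = k} : ℝ≥0∞) *
        (2 : ℝ≥0∞)⁻¹ ^
          (Nat.card {u : List ℕ | t₀ u = true ∧ u.length < k}
            + Nat.card {u : List ℕ | t₀ u = true} - 1)

/-- The number of vertices of the tree `t` within graph distance `r` of the root. -/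
noncomputable def ballCount (t : List ℕ → Bool) (r : ℕ) : ℝ≥0∞ :=
  ∑' u : List ℕ, if t u = true ∧ u.length ≤ r then 1 else 0

namespace IsFinTree

variable {t : List ℕ → Bool}

theorem of_append (ht : IsFinTree t) {u v : List ℕ} (h : t (u ++ v) = true) : t u = true := by
  induction v using List.reverseRecOn with
  | nil => simpa using h
  | append_singleton v i ih =>
    rw [← List.append_assoc] at h
    exact ih (ht.2.1 _ _ h)

theorem subtree (ht : IsFinTree t) {u : List ℕ} (hu : t u = true) :
    IsFinTree fun v => t (u ++ v) := by
  refine ⟨by simpa using hu, fun v i h => ?_, fun v i j hij h => ?_, ?_⟩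
  · dsimp only at h ⊢
    rw [← List.append_assoc] at h
    exact ht.2.1 _ _ h
  · dsimp only at h ⊢
    rw [← List.append_assoc] at h ⊢
    exact ht.2.2.1 _ _ _ hij h
  · exact ht.2.2.2.preimage (List.append_right_injective u).injOn

theorem length_lt_card (ht : IsFinTree t) {u : List ℕ} (hu : t u = true) :
    u.length < Nat.card {u : List ℕ | t u = true} := by
  have : Finite {u : List ℕ | t u = true} := ht.2.2.2
  let f : Fin (u.length + 1) → {u : List ℕ | t u = true} := fun i =>
    ⟨u.take i, ht.of_append (v := u.drop i) (by simpa using hu)⟩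
  have hf : Function.Injective f := fun i j hij => by
    have := congrArg List.length (congrArg Subtype.val hij)
    simp only [f, List.length_take] at this
    omega
  simpa using Nat.card_le_card_of_injective f hf

theorem lt_card_of_mem (ht : IsFinTree t) {u : List ℕ} (hu : t u = true) {i : ℕ} (hi : i ∈ u) :
    i < Nat.card {u : List ℕ | t u = true} := by
  have : Finite {u : List ℕ | t u = true} := ht.2.2.2
  obtain ⟨p, s, rfl⟩ := List.append_of_mem hi
  have hp : t (p ++ [i]) = true := ht.of_append (v := s) (by simpa using hu)
  let f : Fin (i + 1) → {u : List ℕ | t u = true} := fun j =>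
    ⟨p ++ [j.1], ht.2.2.1 p i j (by omega) hp⟩
  have hf : Function.Injective f := fun a b hab => by
    simpa [f, Fin.ext_iff] using hab
  simpa using Nat.card_le_card_of_injective f hf

theorem card_pos (ht : IsFinTree t) : 0 < Nat.card {u : List ℕ | t u = true} :=
  (Nat.zero_le _).trans_lt (ht.length_lt_card ht.1)

end IsFinTree

/-- Finite plane trees, as a type. -/
abbrev FinPlaneTree := {t : List ℕ → Bool // IsFinTree t}

namespace FinPlaneTree

/-- The number of edges of a finite plane tree. -/
noncomputable def edges (t : FinPlaneTree) : ℕ := Nat.card {u : List ℕ | t.1 u = true} - 1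

theorem edges_add_one (t : FinPlaneTree) :
    t.edges + 1 = Nat.card {u : List ℕ | t.1 u = true} :=
  Nat.sub_add_cancel t.2.card_pos

instance finite_edges_eq (n : ℕ) : Finite {t : FinPlaneTree // t.edges = n} := by
  have hS : {u : List ℕ | u.length ≤ n ∧ ∀ i ∈ u, i ≤ n}.Finite := by
    refine ((List.finite_length_le (Fin (n + 1)) n).image (List.map Fin.val)).subset ?_
    rintro u ⟨hu, hi⟩
    obtain ⟨v, rfl⟩ : u ∈ Set.range (List.map (Fin.val : Fin (n + 1) → ℕ)) := by
      rw [Set.range_list_map]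
      exact fun i h => ⟨⟨i, Nat.lt_succ_of_le (hi i h)⟩, rfl⟩
    exact ⟨v, by simpa using hu, rfl⟩
  have : Finite {s : Set (List ℕ) | s ⊆ {u : List ℕ | u.length ≤ n ∧ ∀ i ∈ u, i ≤ n}} :=
    hS.finite_subsets
  refine Finite.of_injective
    (β := {s : Set (List ℕ) | s ⊆ {u : List ℕ | u.length ≤ n ∧ ∀ i ∈ u, i ≤ n}})
    (fun t : {t : FinPlaneTree // t.edges = n} => ⟨{u | t.1.1 u = true}, fun u hu => ?_⟩) ?_
  · have h := t.1.edges_add_one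
    rw [t.2] at h
    have h₁ := t.1.2.length_lt_card hu
    refine ⟨by omega, fun i hi => ?_⟩
    have := t.1.2.lt_card_of_mem hu hi
    omega
  · intro a b hab
    ext u
    exact Bool.eq_iff_iff.2 (Set.ext_iff.1 (congrArg Subtype.val hab) u)

end FinPlaneTree

/-- The vertices of `t₀` at generation `k`. -/
abbrev Level (t₀ : List ℕ → Bool) (k : ℕ) := {u : List ℕ // t₀ u = true ∧ u.length = k}

open Classical in
/-- The tree obtained from the first `k` generations of `t₀` by grafting a tree at each vertex
of generation `k`. -/
noncomputable def graft (t₀ : List ℕ → Bool) (k : ℕ) (F : Level t₀ k → FinPlaneTree) :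
    List ℕ → Bool := fun w =>
  decide ((t₀ w = true ∧ w.length < k) ∨ ∃ z : Level t₀ k, ∃ v, w = z.1 ++ v ∧ (F z).1 v = true)

section Graft

variable {t t₀ : List ℕ → Bool} {k : ℕ} {F : Level t₀ k → FinPlaneTree}

theorem graft_eq_true {w : List ℕ} : graft t₀ k F w = true ↔ (t₀ w = true ∧ w.length < k) ∨
    ∃ z : Level t₀ k, ∃ v, w = z.1 ++ v ∧ (F z).1 v = true := by
  simp [graft]

theorem Level.finite (h₀ : IsFinTree t₀) : Finite (Level t₀ k) :=
  h₀.2.2.2.subset fun _ h => h.1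

theorem graft_append (z : Level t₀ k) (v : List ℕ) : graft t₀ k F (z.1 ++ v) = (F z).1 v := by
  rw [Bool.eq_iff_iff, graft_eq_true]
  constructor
  · rintro (⟨-, h⟩ | ⟨z', v', h, h'⟩)
    · have := z.2.2
      simp only [List.length_append] at h
      omega
    · obtain ⟨h₁, rfl⟩ := List.append_inj h (z.2.2.trans z'.2.2.symm)
      rwa [Subtype.ext h₁]
  · exact fun h => Or.inr ⟨z, v, rfl, h⟩

theorem graft_eq_of_length_le {w : List ℕ} (hw : w.length ≤ k) : graft t₀ k F w = t₀ w := by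
  rcases hw.lt_or_eq with hw | hw
  · rw [Bool.eq_iff_iff, graft_eq_true]
    constructor
    · rintro (⟨h, -⟩ | ⟨z, v, rfl, -⟩)
      · exact h
      · have := z.2.2
        simp only [List.length_append] at hw
        omega
    · exact fun h => Or.inl ⟨h, hw⟩
  · rw [Bool.eq_iff_iff]
    constructor
    · rw [graft_eq_true]
      rintro (⟨h, -⟩ | ⟨z, v, rfl, -⟩)
      · exact h
      · have := z.2.2
        simp only [List.length_append] at hw
        obtain rfl : v = [] := List.length_eq_zero_iff.1 (by omega)
        simpa using z.2.1
    · intro h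
      simpa using (graft_append ⟨w, h, hw⟩ []).trans (F _).2.1

theorem graft_isFinTree (h₀ : IsFinTree t₀) : IsFinTree (graft t₀ k F) := by
  refine ⟨by simpa [graft_eq_of_length_le] using h₀.1, fun u i h => ?_, fun u i j hij h => ?_, ?_⟩
  · rcases le_or_gt (u ++ [i]).length k with hk | hk
    · rw [graft_eq_of_length_le hk] at h
      rw [graft_eq_of_length_le (by simp at hk; omega)]
      exact h₀.2.1 _ _ h
    · rcases graft_eq_true.1 h with ⟨-, h'⟩ | ⟨z, v, hv, hF⟩
      · omega
      · rcases List.eq_nil_or_concat v with rfl | ⟨v, a, rfl⟩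
        · simp [← z.2.2, hv] at hk
        · rw [List.concat_eq_append, ← List.append_assoc] at hv
          obtain ⟨rfl, -⟩ := List.append_inj' hv rfl
          rw [graft_append]
          exact (F z).2.2.1 v a (by simpa using hF)
  · rcases le_or_gt (u ++ [i]).length k with hk | hk
    · rw [graft_eq_of_length_le hk] at h
      rw [graft_eq_of_length_le (by simpa using hk)]
      exact h₀.2.2.1 _ _ _ hij h
    · rcases graft_eq_true.1 h with ⟨-, h'⟩ | ⟨z, v, hv, hF⟩
      · omega
      · rcases List.eq_nil_or_concat v with rfl | ⟨v, a, rfl⟩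
        · simp [← z.2.2, hv] at hk
        · rw [List.concat_eq_append, ← List.append_assoc] at hv
          obtain ⟨rfl, ha⟩ := List.append_inj' hv rfl
          obtain rfl : i = a := by simpa using ha
          rw [List.append_assoc, graft_append]
          exact (F z).2.2.2.1 v i j hij (by simpa using hF)
  · have := Level.finite (k := k) h₀
    refine (h₀.2.2.2.union (Set.finite_iUnion fun z : Level t₀ k =>
      (F z).2.2.2.2.image (z.1 ++ ·))).subset fun w hw => ?_
    rcases graft_eq_true.1 hw with ⟨h, -⟩ | ⟨z, v, rfl, h⟩
    · exact Or.inl h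
    · exact Or.inr (Set.mem_iUnion.2 ⟨z, v, h, rfl⟩)

/-- Trees with the same first `k` generations as `t₀` correspond to families of trees indexed
by the vertices of `t₀` at generation `k`. -/
noncomputable def graftEquiv (h₀ : IsFinTree t₀) (k : ℕ) :
    {t : FinPlaneTree // ∀ u : List ℕ, u.length ≤ k → t.1 u = t₀ u} ≃
      (Level t₀ k → FinPlaneTree) where
  toFun t z := ⟨fun v => t.1.1 (z.1 ++ v),
    t.1.2.subtree (by rw [t.2 _ z.2.2.le]; exact z.2.1)⟩
  invFun F := ⟨⟨graft t₀ k F, graft_isFinTree h₀⟩, fun _ => graft_eq_of_length_le⟩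
  left_inv := by
    rintro ⟨⟨t, ht⟩, h⟩
    ext w : 3
    rcases le_or_gt w.length k with hw | hw
    · exact (graft_eq_of_length_le hw).trans (h w hw).symm
    · dsimp only
      rw [Bool.eq_iff_iff, graft_eq_true]
      constructor
      · rintro (⟨-, h⟩ | ⟨z, v, rfl, h⟩)
        · omega
        · exact h
      · intro hw'
        have hl : (w.take k).length = k := by simp; omega
        refine Or.inr ⟨⟨w.take k, ?_, hl⟩, w.drop k, by simp, by simpa using hw'⟩
        rw [← h _ hl.le]
        exact ht.of_append (v := w.drop k) (by simpa using hw')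
  right_inv F := by
    ext z v : 3
    exact graft_append z v

theorem card_eq_card_lt_add_sum_card [Fintype (Level t₀ k)] (ht : IsFinTree t)
    (h : ∀ u : List ℕ, u.length ≤ k → t u = t₀ u) :
    Nat.card {u : List ℕ | t u = true} = Nat.card {u : List ℕ | t₀ u = true ∧ u.length < k} +
      ∑ z : Level t₀ k, Nat.card {v : List ℕ | t (z.1 ++ v) = true} := by
  have hz (z : Level t₀ k) : IsFinTree fun v => t (z.1 ++ v) :=
    ht.subtree (by rw [h _ z.2.2.le]; exact z.2.1)
  have (z : Level t₀ k) : Finite {v : List ℕ | t (z.1 ++ v) = true} := (hz z).2.2.2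
  have : Finite {u : List ℕ | t₀ u = true ∧ u.length < k} :=
    ht.2.2.2.subset fun u hu => by
      change t u = true
      rw [h u hu.2.le]
      exact hu.1
  rw [← Nat.card_sigma, ← Nat.card_sum]
  let f : {u : List ℕ | t₀ u = true ∧ u.length < k} ⊕
      (Σ z : Level t₀ k, {v : List ℕ | t (z.1 ++ v) = true}) → {u : List ℕ | t u = true} :=
    Sum.elim (fun u => ⟨u.1, (h _ u.2.2.le).trans u.2.1⟩) fun p => ⟨p.1.1 ++ p.2.1, p.2.2⟩
  refine (Nat.card_congr (Equiv.ofBijective f ⟨?_, ?_⟩)).symm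
  · rintro (⟨u, _, hu⟩ | ⟨⟨z, _, hz⟩, ⟨v, _⟩⟩) (⟨u', _, hu'⟩ | ⟨⟨z', _, hz'⟩, ⟨v', _⟩⟩) he
    · simpa [f] using he
    · have := congrArg List.length (congrArg Subtype.val he)
      simp [f] at this
      omega
    · have := congrArg List.length (congrArg Subtype.val he)
      simp [f] at this
      omega
    · obtain ⟨rfl, rfl⟩ := List.append_inj (congrArg Subtype.val he) (hz.trans hz'.symm)
      rfl
  · rintro ⟨w, hw⟩
    rcases lt_or_ge w.length k with hk | hk
    · exact ⟨Sum.inl ⟨w, (h w hk.le).symm.trans hw, hk⟩, rfl⟩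
    · have hl : (w.take k).length = k := by simp; omega
      have hwt : t (w.take k ++ w.drop k) = true := by simpa using hw
      refine ⟨Sum.inr ⟨⟨w.take k, (h _ hl.le).symm.trans (ht.of_append hwt), hl⟩,
        ⟨w.drop k, hwt⟩⟩, ?_⟩
      simp [f]

theorem card_eq_card_lt_add_card_level (h₀ : IsFinTree t₀)
    (hk : ∀ u, t₀ u = true → u.length ≤ k) :
    Nat.card {u : List ℕ | t₀ u = true} =
      Nat.card {u : List ℕ | t₀ u = true ∧ u.length < k} + Nat.card (Level t₀ k) := by
  have := Level.finite (k := k) h₀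
  have := Fintype.ofFinite (Level t₀ k)
  rw [card_eq_card_lt_add_sum_card (k := k) h₀ fun _ _ => rfl,
    Nat.card_eq_fintype_card (α := Level t₀ k),
    Fintype.card_eq_sum_ones (α := Level t₀ k)]
  congr 1
  refine Finset.sum_congr rfl fun z _ => ?_
  have : {v : List ℕ | t₀ (z.1 ++ v) = true} = {[]} := by
    ext v
    constructor
    · intro hv
      have h₁ := hk _ hv
      have h₂ := z.2.2
      simp only [List.length_append] at h₁
      exact List.length_eq_zero_iff.1 (by omega)
    · rintro rfl
      simpa using z.2.1
  rw [this]
  simp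

theorem edges_eq_edges_add_sum [Fintype (Level t₀ k)] (h₀ : IsFinTree t₀)
    (hk : ∀ u, t₀ u = true → u.length ≤ k)
    (t : {t : FinPlaneTree // ∀ u : List ℕ, u.length ≤ k → t.1 u = t₀ u}) :
    t.1.edges = FinPlaneTree.edges ⟨t₀, h₀⟩ + ∑ z, (graftEquiv h₀ k t z).edges := by
  have h₁ := card_eq_card_lt_add_sum_card t.1.2 t.2
  have h₂ := card_eq_card_lt_add_card_level h₀ hk
  have h₃ (z : Level t₀ k) : Nat.card {v : List ℕ | t.1.1 (z.1 ++ v) = true} =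
      (graftEquiv h₀ k t z).edges + 1 :=
    (FinPlaneTree.edges_add_one (graftEquiv h₀ k t z)).symm
  simp only [h₃, Finset.sum_add_distrib, ← Fintype.card_eq_sum_ones] at h₁
  rw [Nat.card_eq_fintype_card (α := Level t₀ k)] at h₂
  have h₄ := t.1.edges_add_one
  have h₅ := FinPlaneTree.edges_add_one ⟨t₀, h₀⟩
  dsimp only at h₅
  omega

end Graft

open PowerSeries in
theorem natCard_sum_weight_eq_coeff_pow {α ι : Type*} [Fintype ι] (w : α → ℕ)
    [∀ n, Finite {a // w a = n}] (m : ℕ) :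
    (Nat.card {F : ι → α // ∑ i, w (F i) = m} : ℝ) =
      coeff m ((mk fun n => (Nat.card {a // w a = n} : ℝ)) ^ Fintype.card ι) := by
  classical
  rw [← Finset.card_univ, ← Finset.prod_const, coeff_prod]
  simp only [coeff_mk]
  let φ : {F : ι → α // ∑ i, w (F i) = m} → {l // l ∈ Finset.finsuppAntidiag Finset.univ m} :=
    fun F => ⟨Finsupp.equivFunOnFinite.symm fun i => w (F.1 i), by
      simpa [Finset.mem_finsuppAntidiag] using F.2⟩
  have e (l : {l // l ∈ Finset.finsuppAntidiag (Finset.univ : Finset ι) m}) :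
      {F // φ F = l} ≃ ∀ i, {a // w a = l.1 i} :=
    { toFun F i := ⟨F.1.1 i, DFunLike.congr_fun (congrArg Subtype.val F.2) i⟩
      invFun G := ⟨⟨fun i => (G i).1, by
        simpa [fun i => (G i).2] using (Finset.mem_finsuppAntidiag.1 l.2).1⟩, by
        ext i
        exact (G i).2⟩
      left_inv _ := rfl
      right_inv _ := rfl }
  have (l : {l // l ∈ Finset.finsuppAntidiag (Finset.univ : Finset ι) m}) :
      Finite {F // φ F = l} := Finite.of_equiv _ (e l).symm
  rw [← Nat.card_congr (Equiv.sigmaFiberEquiv φ), Nat.card_sigma]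
  simp only [fun l => Nat.card_congr (e l), Nat.card_pi]
  push_cast
  exact Finset.sum_coe_sort (Finset.finsuppAntidiag (Finset.univ : Finset ι) m)
    fun l => ∏ i, (Nat.card {a // w a = l i} : ℝ)

/-- The generating function of finite plane trees counted by their number of edges. -/
noncomputable def treeSeries : PowerSeries ℝ :=
  PowerSeries.mk fun n => (Nat.card {t : FinPlaneTree // t.edges = n} : ℝ)

open PowerSeries in
theorem natCard_truncation_eq_coeff {t₀ : List ℕ → Bool} {k : ℕ} (h₀ : IsFinTree t₀)
    (hk : ∀ u, t₀ u = true → u.length ≤ k) (n : ℕ) :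
    (Nat.card {t : FinPlaneTree //
        (∀ u : List ℕ, u.length ≤ k → t.1 u = t₀ u) ∧ t.edges = n} : ℝ) =
      coeff n (X ^ FinPlaneTree.edges ⟨t₀, h₀⟩ * treeSeries ^ Nat.card (Level t₀ k)) := by
  have := Level.finite (k := k) h₀
  have := Fintype.ofFinite (Level t₀ k)
  have e : {t : FinPlaneTree // (∀ u : List ℕ, u.length ≤ k → t.1 u = t₀ u) ∧ t.edges = n} ≃
      {F : Level t₀ k → FinPlaneTree //
        FinPlaneTree.edges ⟨t₀, h₀⟩ + ∑ z, (F z).edges = n} :=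
    (Equiv.subtypeSubtypeEquivSubtypeInter _ _).symm.trans
      ((graftEquiv h₀ k).subtypeEquiv fun t => by rw [edges_eq_edges_add_sum h₀ hk])
  rw [Nat.card_congr e, coeff_X_pow_mul', Nat.card_eq_fintype_card (α := Level t₀ k)]
  split_ifs with hn
  · rw [treeSeries, ← natCard_sum_weight_eq_coeff_pow]
    congr 1
    exact Nat.card_congr (Equiv.subtypeEquivRight fun F => by omega)
  · have : IsEmpty {F : Level t₀ k → FinPlaneTree //
        FinPlaneTree.edges ⟨t₀, h₀⟩ + ∑ z, (F z).edges = n} := ⟨fun F => by have := F.2; omega⟩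
    simp

/-- The tree of height at most one whose root has `d` children. -/
def starTree (d : ℕ) : List ℕ → Bool
  | [] => true
  | [i] => decide (i < d)
  | _ => false

theorem starTree_eq_true {d : ℕ} {u : List ℕ} :
    starTree d u = true ↔ u = [] ∨ ∃ i < d, u = [i] := by
  rcases u with _ | ⟨i, _ | ⟨j, u⟩⟩ <;> simp [starTree]

theorem length_le_one_of_starTree {d : ℕ} (u : List ℕ) (hu : starTree d u = true) : u.length ≤ 1 := by
  rcases starTree_eq_true.1 hu with rfl | ⟨i, -, rfl⟩ <;> simp

theorem isFinTree_starTree (d : ℕ) : IsFinTree (starTree d) := by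
  have h {u : List ℕ} {i : ℕ} (h : starTree d (u ++ [i]) = true) : u = [] ∧ i < d := by
    rcases u with _ | ⟨j, u⟩
    · simpa [starTree] using h
    · simpa using length_le_one_of_starTree _ h
  refine ⟨rfl, fun u i hu => ?_, fun u i j hij hu => ?_, ?_⟩
  · rw [(h hu).1]
    rfl
  · obtain ⟨rfl, hi⟩ := h hu
    exact starTree_eq_true.2 (Or.inr ⟨j, by omega, rfl⟩)
  · refine (((Set.finite_Iio d).image fun i => [i]).insert []).subset fun u hu => ?_
    rcases starTree_eq_true.1 hu with rfl | ⟨i, hi, rfl⟩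
    · exact Set.mem_insert _ _
    · exact Set.mem_insert_of_mem _ ⟨i, hi, rfl⟩

theorem natCard_level_starTree (d : ℕ) : Nat.card (Level (starTree d) 1) = d := by
  let f : Fin d → Level (starTree d) 1 := fun i => ⟨[i.1], by simp [starTree], rfl⟩
  have hf : Function.Bijective f := by
    refine ⟨fun i j h => by simpa [f, Fin.ext_iff] using h, ?_⟩
    rintro ⟨u, hu, hl⟩
    rcases starTree_eq_true.1 hu with rfl | ⟨i, hi, rfl⟩
    · simp at hl
    · exact ⟨⟨i, hi⟩, rfl⟩
  simpa using (Nat.card_congr (Equiv.ofBijective f hf)).symm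

theorem edges_starTree (d : ℕ) : FinPlaneTree.edges ⟨starTree d, isFinTree_starTree d⟩ = d := by
  have h := card_eq_card_lt_add_card_level (isFinTree_starTree d) length_le_one_of_starTree
  have h₁ : {u : List ℕ | starTree d u = true ∧ u.length < 1} = {[]} := by
    ext u
    rcases u with _ | ⟨i, u⟩ <;> simp [starTree]
  rw [natCard_level_starTree, h₁] at h
  simp [FinPlaneTree.edges, h]

namespace FinPlaneTree

/-- The number of children of the root. -/
noncomputable def rootDegree (t : FinPlaneTree) : ℕ := Nat.card {i : ℕ | t.1 [i] = true}

theorem rootDegree_eq_iff (t : FinPlaneTree) (d : ℕ) :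
    t.rootDegree = d ↔ ∀ u : List ℕ, u.length ≤ 1 → t.1 u = starTree d u := by
  have key {d : ℕ} (h : ∀ u : List ℕ, u.length ≤ 1 → t.1 u = starTree d u) : t.rootDegree = d := by
    have : {i : ℕ | t.1 [i] = true} = Set.Iio d := by
      ext i
      simp [h [i] (by simp), starTree]
    simp [rootDegree, this]
  refine ⟨?_, key⟩
  have hex : ∃ i, t.1 [i] ≠ true :=
    ⟨Nat.card {u : List ℕ | t.1 u = true}, fun h =>
      (t.2.lt_card_of_mem h (List.mem_singleton_self _)).false⟩
  have hd : ∀ u : List ℕ, u.length ≤ 1 → t.1 u = starTree (Nat.find hex) u := by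
    rintro (_ | ⟨i, _ | ⟨j, u⟩⟩) hu
    · exact t.2.1
    · rw [Bool.eq_iff_iff]
      simp only [starTree, decide_eq_true_eq]
      constructor
      · intro hi
        by_contra! hle
        exact Nat.find_spec hex (t.2.2.2.1 [] i _ hle hi)
      · exact fun hi => not_not.1 (Nat.find_min hex hi)
    · simp at hu
  rintro rfl
  rwa [key hd]

theorem rootDegree_le_edges (t : FinPlaneTree) : t.rootDegree ≤ t.edges := by
  have := Level.finite (k := 1) (isFinTree_starTree t.rootDegree)
  have := Fintype.ofFinite (Level (starTree t.rootDegree) 1)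
  have h := edges_eq_edges_add_sum (isFinTree_starTree t.rootDegree) length_le_one_of_starTree
    ⟨t, (t.rootDegree_eq_iff _).1 rfl⟩
  rw [edges_starTree] at h
  exact h ▸ Nat.le_add_right _ _

end FinPlaneTree

open PowerSeries in
theorem coeff_treeSeries_eq_sum (n : ℕ) :
    coeff n treeSeries = ∑ d ∈ Finset.range (n + 1), coeff n ((X * treeSeries) ^ d) := by
  have h (d : ℕ) := natCard_truncation_eq_coeff (isFinTree_starTree d) length_le_one_of_starTree n
  simp only [edges_starTree, natCard_level_starTree, ← mul_pow, ← FinPlaneTree.rootDegree_eq_iff] at h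
  simp only [← h]
  rw [← Fin.sum_univ_eq_sum_range
    (fun d => (Nat.card {t : FinPlaneTree // t.rootDegree = d ∧ t.edges = n} : ℝ))]
  let φ : {t : FinPlaneTree // t.edges = n} → Fin (n + 1) := fun t =>
    ⟨t.1.rootDegree, Nat.lt_succ_of_le (t.1.rootDegree_le_edges.trans_eq t.2)⟩
  rw [treeSeries, coeff_mk, ← Nat.card_congr (Equiv.sigmaFiberEquiv φ), Nat.card_sigma]
  push_cast
  refine Finset.sum_congr rfl fun d _ => ?_
  congr 1
  refine Nat.card_congr (Equiv.trans (Equiv.subtypeEquivRight fun t => ?_)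
    ((Equiv.subtypeSubtypeEquivSubtypeInter (fun t : FinPlaneTree => t.edges = n)
      fun t => t.rootDegree = d).trans (Equiv.subtypeEquivRight fun t => and_comm)))
  simp [φ, Fin.ext_iff]

open PowerSeries in
theorem treeSeries_eq : treeSeries = 1 + X * treeSeries ^ 2 := by
  have hdvd (N : ℕ) : (X : PowerSeries ℝ) ^ (N + 1) ∣ treeSeries - (1 + X * treeSeries ^ 2) := by
    have h₁ : (X : PowerSeries ℝ) ^ (N + 1) ∣
        treeSeries - ∑ d ∈ Finset.range (N + 1), (X * treeSeries) ^ d := by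
      rw [X_pow_dvd_iff]
      intro m hm
      rw [map_sub, map_sum, coeff_treeSeries_eq_sum, sub_eq_zero]
      refine Finset.sum_subset (Finset.range_subset_range.2 (by omega)) fun d _ hd => ?_
      rw [mul_pow, coeff_X_pow_mul', if_neg]
      simpa using hd
    have h₂ : (X : PowerSeries ℝ) ^ (N + 1) ∣ (X * treeSeries) ^ (N + 1) :=
      pow_dvd_pow_of_dvd (dvd_mul_right _ _) _
    have h₃ := mul_neg_geom_sum (X * treeSeries) (N + 1)
    have : treeSeries - (1 + X * treeSeries ^ 2) =
        (1 - X * treeSeries) *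
          (treeSeries - ∑ d ∈ Finset.range (N + 1), (X * treeSeries) ^ d) -
        (X * treeSeries) ^ (N + 1) := by
      rw [mul_sub, h₃]
      ring
    rw [this]
    exact dvd_sub (h₁.mul_left _) h₂
  ext n
  rw [← sub_eq_zero, ← map_sub]
  exact X_pow_dvd_iff.1 (hdvd n) n n.lt_succ_self

open PowerSeries in
theorem coeff_treeSeries (n : ℕ) : coeff n treeSeries = catalan n := by
  induction n using Nat.strong_induction_on with
  | _ n ih =>
    rcases n with _ | n
    · rw [treeSeries_eq]
      simp
    · rw [treeSeries_eq, map_add, coeff_one, if_neg n.succ_ne_zero, zero_add, coeff_succ_X_mul, sq,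
        coeff_mul, catalan_succ']
      push_cast
      refine Finset.sum_congr rfl fun p hp => ?_
      have := Finset.HasAntidiagonal.mem_antidiagonal.1 hp
      rw [ih _ (by omega), ih _ (by omega)]

theorem catalan_pos (n : ℕ) : 0 < catalan n := by
  refine Nat.pos_of_mul_pos_left (a := n + 1) ?_
  rw [succ_mul_catalan_eq_centralBinom]
  exact n.centralBinom_pos

open Filter Topology

theorem tendsto_catalan_succ_div :
    Tendsto (fun n => (catalan (n + 1) : ℝ) / catalan n) atTop (𝓝 4) := by
  have h (n : ℕ) : (catalan (n + 1) : ℝ) / catalan n = 4 - 6 / ((n : ℝ) + 2) := by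
    have h₁ : ((n : ℝ) + 1) * catalan n = n.centralBinom := by
      exact_mod_cast succ_mul_catalan_eq_centralBinom n
    have h₂ : ((n : ℝ) + 2) * catalan (n + 1) = (n + 1).centralBinom := by
      exact_mod_cast succ_mul_catalan_eq_centralBinom (n + 1)
    have h₃ : ((n : ℝ) + 1) * (n + 1).centralBinom = 2 * (2 * n + 1) * n.centralBinom := by
      exact_mod_cast n.succ_mul_centralBinom_succ
    have h₄ : (catalan n : ℝ) ≠ 0 := by exact_mod_cast (catalan_pos n).ne'
    have h₅ : (n : ℝ) + 1 ≠ 0 := by positivity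
    rw [← h₁, ← h₂] at h₃
    have h₆ : ((n : ℝ) + 2) * catalan (n + 1) = 2 * (2 * n + 1) * catalan n :=
      mul_left_cancel₀ h₅ (by linear_combination h₃)
    field_simp
    linear_combination h₆
  simp only [h]
  have : Tendsto (fun n : ℕ => (n : ℝ) + 2) atTop atTop :=
    tendsto_atTop_add_const_right _ _ tendsto_natCast_atTop_atTop
  simpa using (tendsto_const_nhds (x := (4 : ℝ))).sub (this.const_div_atTop 6)

theorem tendsto_catalan_div_catalan_add (e : ℕ) :
    Tendsto (fun n => (catalan n : ℝ) / catalan (n + e)) atTop (𝓝 ((4⁻¹ : ℝ) ^ e)) := by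
  induction e with
  | zero =>
    have (n : ℕ) : (catalan n : ℝ) ≠ 0 := by exact_mod_cast (catalan_pos n).ne'
    simp [this]
  | succ e ih =>
    have h := ((tendsto_add_atTop_iff_nat e).2 tendsto_catalan_succ_div).inv₀ four_ne_zero
    refine (ih.mul h).congr fun n => ?_
    have : (catalan (n + e) : ℝ) ≠ 0 := by exact_mod_cast (catalan_pos _).ne'
    rw [inv_div, div_mul_div_cancel₀ this, add_assoc]

open PowerSeries in
theorem coeff_treeSeries_pow_add_two (z m : ℕ) : coeff m (treeSeries ^ (z + 2)) =
    coeff (m + 1) (treeSeries ^ (z + 1)) - coeff (m + 1) (treeSeries ^ z) := by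
  have : treeSeries ^ (z + 1) = treeSeries ^ z + X * treeSeries ^ (z + 2) := by
    linear_combination treeSeries ^ z * treeSeries_eq
  rw [this, map_add, coeff_succ_X_mul]
  ring

open PowerSeries in
theorem tendsto_coeff_treeSeries_pow_div (z : ℕ) :
    Tendsto (fun m => coeff m (treeSeries ^ z) / catalan m) atTop (𝓝 (z * 2 ^ z / 2)) := by
  have hne (n : ℕ) : (catalan n : ℝ) ≠ 0 := by exact_mod_cast (catalan_pos n).ne'
  induction z using Nat.twoStepInduction with
  | zero =>
    refine tendsto_const_nhds.congr' ?_
    filter_upwards [eventually_gt_atTop 0] with m hm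
    simp [coeff_one, hm.ne']
  | one => simp [coeff_treeSeries, hne]
  | more z ih₀ ih₁ =>
    have h := (((tendsto_add_atTop_iff_nat 1).2 ih₁).sub
      ((tendsto_add_atTop_iff_nat 1).2 ih₀)).mul tendsto_catalan_succ_div
    convert h.congr fun m => ?_ using 2
    · push_cast
      ring
    · rw [coeff_treeSeries_pow_add_two, ← sub_div, div_mul_div_cancel₀ (hne _)]

/-- Convergence of the truncated uniform plane trees towards the uniform infinite plane
tree: for every `k ≥ 0` and every finite plane tree `t₀` of height at most `k`, the
proportion of plane trees with `n` edges (i.e. `n+1` vertices) whose first `k` generations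
coincide with `t₀` converges, as `n → ∞`, to the probability that the first `k`
generations of `T_∞` coincide with `t₀`. -/
theorem uniform_tree_truncation_converges_to_uipt
    {Ω : Type*} [MeasurableSpace Ω] (P : Measure Ω) [IsProbabilityMeasure P]
    (T : Ω → List ℕ → Bool) (hTm : Measurable T) (hT : HasUIPTLaw P T) :
    ∀ (k : ℕ) (t₀ : List ℕ → Bool), IsFinTree t₀ → (∀ u, t₀ u = true → u.length ≤ k) →
      Filter.Tendsto
        (fun n : ℕ =>
          (Nat.card {t : List ℕ → Bool | IsFinTree t ∧
              Nat.card {u : List ℕ | t u = true} = n + 1 ∧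
              ∀ u : List ℕ, u.length ≤ k → t u = t₀ u} : ℝ) /
          (Nat.card {t : List ℕ → Bool | IsFinTree t ∧
              Nat.card {u : List ℕ | t u = true} = n + 1} : ℝ))
        Filter.atTop
        (nhds (P {ω | ∀ u : List ℕ, u.length ≤ k → T ω u = t₀ u}).toReal) := by
  intro k t₀ h₀ hk
  have hden (n : ℕ) : (Nat.card {t : List ℕ → Bool | IsFinTree t ∧
      Nat.card {u : List ℕ | t u = true} = n + 1} : ℝ) = catalan n := by
    rw [← coeff_treeSeries, treeSeries, PowerSeries.coeff_mk]
    congr 1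
    refine Nat.card_congr ((Equiv.subtypeSubtypeEquivSubtypeInter IsFinTree
      fun t => Nat.card {u : List ℕ | t u = true} = n + 1).symm.trans
      (Equiv.subtypeEquivRight fun t => ?_))
    rw [← FinPlaneTree.edges_add_one t, Nat.add_right_cancel_iff]
  have hnum (n : ℕ) : (Nat.card {t : List ℕ → Bool | IsFinTree t ∧
      Nat.card {u : List ℕ | t u = true} = n + 1 ∧
      ∀ u : List ℕ, u.length ≤ k → t u = t₀ u} : ℝ) = PowerSeries.coeff n
        (PowerSeries.X ^ FinPlaneTree.edges ⟨t₀, h₀⟩ * treeSeries ^ Nat.card (Level t₀ k)) := by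
    rw [← natCard_truncation_eq_coeff h₀ hk]
    congr 1
    refine Nat.card_congr ((Equiv.subtypeSubtypeEquivSubtypeInter IsFinTree
      fun t => Nat.card {u : List ℕ | t u = true} = n + 1 ∧
        ∀ u : List ℕ, u.length ≤ k → t u = t₀ u).symm.trans
      (Equiv.subtypeEquivRight fun t => ?_))
    rw [← FinPlaneTree.edges_add_one t, Nat.add_right_cancel_iff, and_comm]
  simp only [hden, hnum]
  rw [hT.2 k t₀ h₀ hk, ← tendsto_add_atTop_iff_nat (FinPlaneTree.edges ⟨t₀, h₀⟩)]
  have hlim := (tendsto_coeff_treeSeries_pow_div (Nat.card (Level t₀ k))).mul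
    (tendsto_catalan_div_catalan_add (FinPlaneTree.edges ⟨t₀, h₀⟩))
  convert hlim.congr fun n => ?_ using 2
  · have h₁ := card_eq_card_lt_add_card_level h₀ hk
    have h₂ := FinPlaneTree.edges_add_one ⟨t₀, h₀⟩
    dsimp only at h₂
    change ((Nat.card (Level t₀ k) : ℝ≥0∞) * _).toReal = _
    generalize Nat.card (Level t₀ k) = z at *
    generalize Nat.card {u : List ℕ | t₀ u = true ∧ u.length < k} = b at *
    generalize FinPlaneTree.edges ⟨t₀, h₀⟩ = e at *
    generalize Nat.card {u : List ℕ | t₀ u = true} = c at *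
    rcases z with _ | z
    · simp
    · obtain rfl : c = b + z + 1 := by omega
      obtain rfl : e = b + z := by omega
      have h₄ : (4 : ℝ) = 2 ^ 2 := by norm_num
      simp only [ENNReal.toReal_mul, ENNReal.toReal_pow, ENNReal.toReal_inv, ENNReal.toReal_natCast,
        ENNReal.toReal_ofNat, h₄, show b + (b + z + 1) - 1 = 2 * b + z by omega]
      simp only [inv_pow, ← pow_mul, pow_add, two_mul]
      field_simp
  · have : (catalan n : ℝ) ≠ 0 := by exact_mod_cast (catalan_pos n).ne'
    rw [div_mul_div_cancel₀ this, PowerSeries.coeff_X_pow_mul]
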